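/- Let R : Fin 5 → EuclideanSpace ℝ (Fin 4) be the vertices of a regular 4-dimensional simplex (all pairwise distances equal and positive). There exists ε > 0 such that for every V : Fin 5 → EuclideanSpace ℝ (Fin 4) with ‖V i − R i‖ < ε for all i, the family V is affinely independent and the simplex conv(range V) has an edge {V i, V j} (i ≠ j) whose trihedral angle is at most the trihedral angle of conv(range R) at the edge {R 0, R 1}. -/

import Mathlib

open MeasureTheory
open scoped ENNReal RealInnerProductSpace

/-- The trihedral angle of `P ⊆ ℝ⁴` at the edge with endpoints `a`, `b`: the 2-dimensional
Hausdorff measure of the set of unit vectors orthogonal to `b - a` pointing from the edge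
midpoint into `P`. -/
noncomputable def trihedralAngle4 (P : Set (EuclideanSpace ℝ (Fin 4)))
    (a b : EuclideanSpace ℝ (Fin 4)) : ℝ≥0∞ :=
  μH[2] {u : EuclideanSpace ℝ (Fin 4) |
    ‖u‖ = 1 ∧ ⟪u, b - a⟫ = 0 ∧ ∃ t > (0 : ℝ), midpoint ℝ a b + t • u ∈ P}

/-!
The trihedral angle at an edge is the area of a spherical triangle, so by Girard's theorem
(`girard`, `IsBarycentric.trihedralAngle_eq`) it is an increasing affine function, the same for all
simplices and edges, of the sum of the three dihedral angles between the facets containing the edge.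
These are the facets opposite to the three remaining vertices `k`, `l`, `m`. Since the normalisation
of `μH[2]` plays no role, Girard's theorem is proved up to one constant: the longitude of a random
point on the sphere is uniformly distributed by rotation invariance, which makes the area of a lune
proportional to its angle, and inclusion-exclusion does the rest.

For the regular simplex all dihedral angles are `θ₀ = arccos (1 / 4)`. Suppose that for a nearby
simplex with dihedral angles `θ₀ + D k l` every trihedral angle exceeds the regular one. Then the ten
sums `D k l + D k m + D l m` are all positive. These sums determine the ten numbers `D k l` linearly
(indexing a triple by its complementary pair, the coefficient matrix is the adjacency matrix of the
Petersen graph of disjoint pairs, which is invertible), and this yields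
`|D k l| ≤ 3 / 2 * T`, where `T > 0` is the sum of all `D k l`.

On the other hand the facet normals `n k` of a simplex, scaled to be the gradients of the barycentric
coordinates, add up to zero. This is a constraint on the dihedral angles whose linearisation at the
regular simplex says that the `D k l` have sum zero: quantitatively, `sum_inner_unit_le` bounds
`∑ (1 / 4 - cos (θ₀ + D k l))`, and hence `T`, by a constant times `T ^ 2`. When all `D k l` are small
this contradicts `T > 0` (`not_all_trihedral_gt`). Smallness holds near the regular simplex because
the normals, which are the columns of the inverse of the matrix with rows `(1, V i)`, depend
continuously on the vertices.
-/

/-! ### Areas of lunes on the unit sphere of a model space -/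

open Real in
instance factTwoPiPos : Fact (0 < 2 * π) := ⟨Real.two_pi_pos⟩

/-- Euclidean 3-space as `ℂ × ℝ` with the `ℓ²` norm, so that the first component carries the
longitude and the second one the height. -/
abbrev Model3 : Type := WithLp 2 (ℂ × ℝ)

/-- Surface measure (2-dimensional Hausdorff measure) of the unit sphere of the model space. -/
noncomputable def sphereMeasure : Measure Model3 :=
  (μH[2]).restrict (Metric.sphere 0 1)

lemma model_norm_sq (x : Model3) : ‖x‖ ^ 2 = x.fst.re ^ 2 + x.fst.im ^ 2 + x.snd ^ 2 := by
  rw [WithLp.prod_norm_sq_eq_of_L2, Complex.sq_norm, Complex.normSq_apply, Real.norm_eq_abs,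
    sq_abs]
  ring

/-- The sphere is the image of a compact rectangle under spherical coordinates, which are Lipschitz
there. -/
lemma hausdorff_model_sphere_lt_top : μH[2] (Metric.sphere (0 : Model3) 1) < ∞ := by
  let f : ℝ × ℝ → Model3 := fun q =>
    WithLp.toLp 2 (((Real.sin q.2 : ℝ) : ℂ) * Complex.exp (q.1 * Complex.I), Real.cos q.2)
  let s : Set (ℝ × ℝ) := Set.Icc (-Real.pi) Real.pi ×ˢ Set.Icc 0 Real.pi
  have hf : ContDiff ℝ 1 f := by
    have h1 : ContDiff ℝ 1 (fun q : ℝ × ℝ => ((q.2.sin : ℝ) : ℂ)) :=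
      Complex.ofRealCLM.contDiff.comp (Real.contDiff_sin.comp contDiff_snd)
    have h2 : ContDiff ℝ 1 (fun q : ℝ × ℝ => Complex.exp (q.1 * Complex.I)) :=
      ((Complex.ofRealCLM.contDiff.comp contDiff_fst).mul contDiff_const).cexp
    have h3 : ContDiff ℝ 1 (fun q : ℝ × ℝ => Real.cos q.2) := Real.contDiff_cos.comp contDiff_snd
    exact (WithLp.prodContinuousLinearEquiv 2 ℝ ℂ ℝ).symm.contDiff.comp
      ((h1.mul h2).prodMk h3)
  have hs : IsCompact s := isCompact_Icc.prod isCompact_Icc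
  obtain ⟨K, hK⟩ := hf.contDiffOn.exists_lipschitzOnWith (s := s) one_ne_zero
    ((convex_Icc _ _).prod (convex_Icc _ _)) hs
  have hle := hK.hausdorffMeasure_image_le (d := 2) (by norm_num)
  have hfin : μH[2] (f '' s) < ∞ := by
    refine hle.trans_lt (ENNReal.mul_lt_top (by simp) ?_)
    rw [hausdorffMeasure_prod_real]
    exact hs.measure_lt_top
  refine (measure_mono ?_).trans_lt hfin
  intro x hx
  have hx1 : ‖x‖ = 1 := by simpa using hx
  have h1 : ‖x.fst‖ ^ 2 + x.snd ^ 2 = 1 := by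
    have := WithLp.prod_norm_sq_eq_of_L2 x
    rw [hx1, Real.norm_eq_abs, sq_abs] at this
    linarith
  have h2 : -1 ≤ x.snd := by nlinarith [sq_nonneg ‖x.fst‖]
  have h3 : x.snd ≤ 1 := by nlinarith [sq_nonneg ‖x.fst‖]
  refine ⟨(x.fst.arg, Real.arccos x.snd), ⟨⟨(Complex.neg_pi_lt_arg _).le, Complex.arg_le_pi _⟩,
    Real.arccos_nonneg _, Real.arccos_le_pi _⟩, ?_⟩
  have h4 : Real.sin (Real.arccos x.snd) = ‖x.fst‖ := by
    rw [Real.sin_arccos, show 1 - x.snd ^ 2 = ‖x.fst‖ ^ 2 by linarith, Real.sqrt_sq (norm_nonneg _)]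
  have h5 := Complex.norm_mul_exp_arg_mul_I x.fst
  simp only [f, h4, Real.cos_arccos h2 h3, h5]
  rfl

instance finiteSphereMeasure : IsFiniteMeasure sphereMeasure :=
  ⟨by simpa [sphereMeasure] using hausdorff_model_sphere_lt_top⟩

/-- Longitude of a point of the model space, as a point of the circle `ℝ / 2πℤ`. -/
noncomputable def longitude (x : Model3) : AddCircle (2 * Real.pi) := (x.fst.arg : ℝ)

lemma measurable_longitude : Measurable longitude :=
  (AddCircle.measurable_mk').comp (Complex.measurable_arg.comp
    (WithLp.prod_continuous_ofLp 2 ℂ ℝ).measurable.fst)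

/-- The two poles, where longitude is meaningless, form a null set. -/
lemma sphereMeasure_poles : ∀ᵐ x ∂sphereMeasure, x.fst ≠ 0 := by
  have : NullSingletonClass (μH[2] : Measure Model3) :=
    Measure.nullSingletonClass_hausdorff _ (by norm_num)
  have hfin : ({WithLp.toLp 2 (0, 1), WithLp.toLp 2 (0, -1)} : Set Model3).Finite := by simp
  rw [sphereMeasure, ae_restrict_iff' Metric.isClosed_sphere.measurableSet]
  have h0 := hfin.measure_zero (μH[2] : Measure Model3)
  filter_upwards [measure_eq_zero_iff_ae_notMem.mp h0] with x hx hS h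
  apply hx
  have hx1 : ‖x‖ = 1 := by simpa using hS
  have h1 := model_norm_sq x
  rw [hx1, h] at h1
  have h2 : x.snd = 1 ∨ x.snd = -1 := by
    have h4 : (x.snd - 1) * (x.snd + 1) = 0 := by
      simp only [Complex.zero_re, Complex.zero_im] at h1
      linarith
    rcases mul_eq_zero.mp h4 with h5 | h5
    · left; linarith
    · right; linarith
  have h3 : x = WithLp.toLp 2 (x.fst, x.snd) := rfl
  rw [h3, h]
  rcases h2 with h2 | h2 <;> simp [h2]

/-- Rotation of the model space about its last axis. -/
noncomputable def axisRotation (w : Circle) : Model3 ≃ᵢ Model3 where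
  toFun x := WithLp.toLp 2 (w * x.fst, x.snd)
  invFun x := WithLp.toLp 2 ((w⁻¹ : Circle) * x.fst, x.snd)
  left_inv x := by
    change WithLp.toLp 2 (((w⁻¹ : Circle) : ℂ) * (w * x.fst), x.snd) = x
    rw [← mul_assoc, ← Circle.coe_mul, inv_mul_cancel, Circle.coe_one, one_mul]
    rfl
  right_inv x := by
    change WithLp.toLp 2 ((w : ℂ) * ((w⁻¹ : Circle) * x.fst), x.snd) = x
    rw [← mul_assoc, ← Circle.coe_mul, mul_inv_cancel, Circle.coe_one, one_mul]
    rfl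
  isometry_toFun := by
    refine Isometry.of_dist_eq fun x y => ?_
    rw [WithLp.prod_dist_eq_of_L2, WithLp.prod_dist_eq_of_L2]
    change √(dist ((w : ℂ) * x.fst) (w * y.fst) ^ 2 + dist x.snd y.snd ^ 2) = _
    rw [Complex.dist_eq, Complex.dist_eq, ← mul_sub, norm_mul, Circle.norm_coe, one_mul]

lemma measurePreserving_axisRotation (w : Circle) :
    MeasurePreserving (axisRotation w) sphereMeasure sphereMeasure := by
  have h := ((axisRotation w).measurePreserving_hausdorffMeasure 2).restrict_preimage
    (s := Metric.sphere (0 : Model3) 1) Metric.isClosed_sphere.measurableSet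
  have hp : axisRotation w ⁻¹' (Metric.sphere (0 : Model3) 1) = Metric.sphere 0 1 := by
    ext x
    have : ‖axisRotation w x‖ ^ 2 = ‖x‖ ^ 2 := by
      rw [WithLp.prod_norm_sq_eq_of_L2, WithLp.prod_norm_sq_eq_of_L2]
      change ‖(w : ℂ) * x.fst‖ ^ 2 + ‖x.snd‖ ^ 2 = _
      rw [norm_mul, Circle.norm_coe, one_mul]
    simp only [Set.mem_preimage, mem_sphere_zero_iff_norm]
    rw [(sq_eq_sq₀ (norm_nonneg _) (norm_nonneg _)).mp this]
  rwa [hp] at h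

lemma longitude_axisRotation (b : ℝ) {x : Model3} (hx : x.fst ≠ 0) :
    longitude (axisRotation (Circle.exp b) x) = (b : AddCircle (2 * Real.pi)) + longitude x := by
  have h := Complex.arg_mul_coe_angle (Circle.coe_ne_zero (Circle.exp b)) hx
  rw [Circle.coe_exp, Complex.arg_exp_mul_I, Real.Angle.coe_toIocMod] at h
  exact h

/-- Rotating the sphere about its axis translates the longitude, so the distribution of the longitude
is translation invariant. -/
instance longitudeMap_invariant : (sphereMeasure.map longitude).IsAddLeftInvariant := by
  constructor
  intro g
  obtain ⟨b, rfl⟩ := QuotientAddGroup.mk_surjective g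
  rw [Measure.map_map (measurable_const_add _) measurable_longitude]
  have h1 : (fun x => (QuotientAddGroup.mk b : AddCircle (2 * Real.pi)) + x) ∘ longitude
      =ᵐ[sphereMeasure] longitude ∘ axisRotation (Circle.exp b) := by
    filter_upwards [sphereMeasure_poles] with x hx
    exact (longitude_axisRotation b hx).symm
  rw [Measure.map_congr h1, ← Measure.map_map measurable_longitude
    (axisRotation _).continuous.measurable, (measurePreserving_axisRotation _).map_eq]

/-- The longitude of a random point of the sphere is uniformly distributed, by uniqueness of Haar
measure on the circle. -/
lemma exists_longitudeMap_eq_smul :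
    ∃ c : NNReal, sphereMeasure.map longitude = c • (volume : Measure (AddCircle (2 * Real.pi))) := by
  have : IsFiniteMeasure (sphereMeasure.map longitude) := inferInstance
  exact ⟨_, Measure.isAddLeftInvariant_eq_smul _ _⟩

/-- The intersection of the unit sphere with two closed half-spaces whose boundaries contain the axis
and whose inner normals have longitudes `0` and `a`. -/
noncomputable def lune (a : ℝ) : Set Model3 :=
  {x | ‖x‖ = 1 ∧ 0 ≤ x.fst.re ∧ 0 ≤ Real.cos a * x.fst.re + Real.sin a * x.fst.im}

/-- The set of longitudes of the points of `lune a` off the axis. -/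
noncomputable def circleArc (a : ℝ) : Set (AddCircle (2 * Real.pi)) :=
  {t | 0 ≤ Real.Angle.cos t ∧
    0 ≤ Real.Angle.cos (t - (a : AddCircle (2 * Real.pi)) : AddCircle (2 * Real.pi))}

lemma measurableSet_circleArc (a : ℝ) : MeasurableSet (circleArc a) := by
  have h1 : Continuous (fun t : AddCircle (2 * Real.pi) => Real.Angle.cos t) :=
    Real.Angle.continuous_cos
  have h2 : Continuous (fun t : AddCircle (2 * Real.pi) =>
      Real.Angle.cos (t - (a : AddCircle (2 * Real.pi)) : AddCircle (2 * Real.pi))) :=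
    Real.Angle.continuous_cos.comp (continuous_id.sub continuous_const)
  exact ((isClosed_le continuous_const h1).inter (isClosed_le continuous_const h2)).measurableSet

lemma volume_circleArc {a : ℝ} (h0 : 0 ≤ a) (hpi : a ≤ Real.pi) :
    volume (circleArc a) = ENNReal.ofReal (Real.pi - a) := by
  have hpos := Real.pi_pos
  have h := (AddCircle.measurePreserving_mk (2 * Real.pi) (-Real.pi)).measure_preimage
    (measurableSet_circleArc a).nullMeasurableSet
  rw [← h, Measure.restrict_apply
    ((AddCircle.measurable_mk') (measurableSet_circleArc a))]
  have hmem : ∀ t : ℝ, t ∈ (QuotientAddGroup.mk ⁻¹' circleArc a : Set ℝ) ↔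
      0 ≤ Real.cos t ∧ 0 ≤ Real.cos (t - a) := by
    intro t
    exact Iff.rfl
  have hlen : Real.pi - a = Real.pi / 2 - (a - Real.pi / 2) := by ring
  apply le_antisymm
  -- the isolated point `-π / 2` belongs to the set when `a = π`
  · calc _ ≤ volume (Set.Icc (a - Real.pi / 2) (Real.pi / 2) ∪ {-(Real.pi / 2)}) := by
          apply measure_mono
          rintro t ⟨ht, ht1, ht2⟩
          obtain ⟨hc1, hc2⟩ := (hmem t).mp ht
          have h1 : t ≤ Real.pi / 2 := by
            by_contra hlt
            exact absurd hc1 (not_le.mpr (Real.cos_neg_of_pi_div_two_lt_of_lt (by linarith)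
              (by linarith)))
          have h2 : -(Real.pi / 2) ≤ t := by
            by_contra hlt
            rw [← Real.cos_neg] at hc1
            exact absurd hc1 (not_le.mpr (Real.cos_neg_of_pi_div_two_lt_of_lt (by linarith)
              (by linarith)))
          by_cases h3 : t = -(Real.pi / 2)
          · right; exact h3
          left
          refine ⟨?_, h1⟩
          by_contra hlt
          have h4 : -(Real.pi / 2) < t := lt_of_le_of_ne h2 (Ne.symm h3)
          rw [← Real.cos_neg] at hc2
          exact absurd hc2 (not_le.mpr (Real.cos_neg_of_pi_div_two_lt_of_lt (by linarith)
              (by linarith)))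
      _ ≤ volume (Set.Icc (a - Real.pi / 2) (Real.pi / 2)) + volume {-(Real.pi / 2)} :=
          measure_union_le _ _
      _ = _ := by rw [Real.volume_Icc, Real.volume_singleton, add_zero, hlen]
  · calc _ = volume (Set.Ioc (a - Real.pi / 2) (Real.pi / 2)) := by rw [Real.volume_Ioc, hlen]
      _ ≤ _ := by
          apply measure_mono
          rintro t ⟨h1, h2⟩
          refine ⟨(hmem t).mpr ⟨Real.cos_nonneg_of_mem_Icc ⟨by linarith, by linarith⟩,
            Real.cos_nonneg_of_mem_Icc ⟨by linarith, by linarith⟩⟩, by linarith, by linarith⟩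

/-- The area of a spherical lune is proportional to its angle `π - a`. The value of the constant,
which depends on the normalisation of the Hausdorff measure, is irrelevant. -/
lemma exists_lune_measure : ∃ c : NNReal,
    (μH[2] (Metric.sphere (0 : Model3) 1) = ENNReal.ofReal (c * (2 * Real.pi))) ∧
    ∀ a, 0 ≤ a → a ≤ Real.pi → μH[2] (lune a) = ENNReal.ofReal (c * (Real.pi - a)) := by
  obtain ⟨c, hc⟩ := exists_longitudeMap_eq_smul
  refine ⟨c, ?_, fun a h0 hpi => ?_⟩
  · have h := congrArg (fun ν => ν Set.univ) hc
    simp only [Measure.map_apply measurable_longitude MeasurableSet.univ, Set.preimage_univ,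
      Measure.smul_apply, AddCircle.measure_univ, sphereMeasure, Measure.restrict_apply_univ] at h
    rw [h, ENNReal.ofReal_mul c.coe_nonneg, ENNReal.ofReal_coe_nnreal]
    rfl
  · have h := congrArg (fun ν => ν (circleArc a)) hc
    simp only [Measure.map_apply measurable_longitude (measurableSet_circleArc a),
      Measure.smul_apply, volume_circleArc h0 hpi] at h
    rw [ENNReal.ofReal_mul c.coe_nonneg, ENNReal.ofReal_coe_nnreal]
    refine Eq.trans ?_ h
    have hsub : lune a ⊆ Metric.sphere 0 1 := fun x hx => by simpa using hx.1
    rw [← Measure.restrict_eq_self μH[2] hsub]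
    apply measure_congr
    change lune a =ᵐ[sphereMeasure] _
    have hS : ∀ᵐ x ∂sphereMeasure, x ∈ Metric.sphere (0 : Model3) 1 :=
      ae_restrict_mem Metric.isClosed_sphere.measurableSet
    filter_upwards [sphereMeasure_poles, hS] with x hx hxS
    have hx1 : ‖x‖ = 1 := by simpa using hxS
    apply propext
    have hn : 0 < ‖x.fst‖ := norm_pos_iff.mpr hx
    have hiff : longitude x ∈ circleArc a ↔
        0 ≤ Real.cos x.fst.arg ∧ 0 ≤ Real.cos (x.fst.arg - a) := Iff.rfl
    change (‖x‖ = 1 ∧ _ ∧ _) ↔ longitude x ∈ circleArc a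
    rw [hiff, Real.cos_sub, ← Complex.norm_mul_cos_arg x.fst, ← Complex.norm_mul_sin_arg x.fst,
      show ∀ p q r s t : ℝ, p * (r * q) + s * (r * t) = r * (q * p + t * s) by intros; ring,
      mul_nonneg_iff_of_pos_left hn, mul_nonneg_iff_of_pos_left hn]
    simp [hx1]

/-! ### Lunes in three-dimensional subspaces of `ℝ⁴` -/

local notation "𝔼" => EuclideanSpace ℝ (Fin 4)

open InnerProductGeometry

/-- Orthonormal coordinates in which `n` lies on the first axis and `m` in the upper half of the
plane of the first two axes, at the angle `angle n m`. -/
lemma exists_adapted_basis {F : Type*} [NormedAddCommGroup F] [InnerProductSpace ℝ F]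
    [FiniteDimensional ℝ F] (hF : Module.finrank ℝ F = 3) {n m : F} (hn : n ≠ 0) (hm : m ≠ 0) :
    ∃ f : OrthonormalBasis (Fin 3) ℝ F, n = ‖n‖ • f 0 ∧
      m = ‖m‖ • (Real.cos (angle n m) • f 0 + Real.sin (angle n m) • f 1) := by
  obtain ⟨b, hb1, hb2, hb3⟩ : ∃ b : OrthonormalBasis (Fin 3) ℝ F,
      ⟪b 1, n⟫ = 0 ∧ ⟪b 2, n⟫ = 0 ∧ ⟪b 2, m⟫ = 0 := by
    have hcard : Module.finrank ℝ F = Fintype.card (Fin 3) := by simpa using hF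
    refine ⟨InnerProductSpace.gramSchmidtOrthonormalBasis hcard ![n, m, 0], ?_, ?_, ?_⟩
    · exact InnerProductSpace.gramSchmidtOrthonormalBasis_inv_triangular hcard ![n, m, 0]
        (i := 0) (j := 1) (by decide)
    · exact InnerProductSpace.gramSchmidtOrthonormalBasis_inv_triangular hcard ![n, m, 0]
        (i := 0) (j := 2) (by decide)
    · exact InnerProductSpace.gramSchmidtOrthonormalBasis_inv_triangular hcard ![n, m, 0]
        (i := 1) (j := 2) (by decide)
  -- flipping signs makes the first coordinate of `n` and the second coordinate of `m` nonnegative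
  obtain ⟨f, hf1, hf2, hf3, hf4, hf5⟩ : ∃ f : OrthonormalBasis (Fin 3) ℝ F,
      ⟪f 1, n⟫ = 0 ∧ ⟪f 2, n⟫ = 0 ∧ ⟪f 2, m⟫ = 0 ∧ 0 ≤ ⟪f 0, n⟫ ∧ 0 ≤ ⟪f 1, m⟫ := by
    have key : ∀ v w : F, ∃ s : ℝ, (s = 1 ∨ s = -1) ∧ 0 ≤ ⟪s • v, w⟫ := by
      intro v w
      rcases le_total 0 ⟪v, w⟫ with h | h
      · exact ⟨1, Or.inl rfl, by simpa using h⟩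
      · exact ⟨-1, Or.inr rfl, by simpa using h⟩
    obtain ⟨s, hs, hs'⟩ := key (b 0) n
    obtain ⟨t, ht, ht'⟩ := key (b 1) m
    have ho : Orthonormal ℝ ![s • b 0, t • b 1, b 2] := by
      have h := b.orthonormal
      rw [orthonormal_iff_ite] at h ⊢
      intro i j
      have hij := h i j
      have hs2 : s * s = 1 := by rcases hs with h | h <;> simp [h]
      have ht2 : t * t = 1 := by rcases ht with h | h <;> simp [h]
      fin_cases i <;> fin_cases j <;>
        simp [real_inner_smul_left, real_inner_smul_right, -inner_self_eq_norm_sq_to_K,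
          h, hs2, ht2]
    have hcard : Fintype.card (Fin 3) = Module.finrank ℝ F := by simpa using hF.symm
    let B := basisOfOrthonormalOfCardEqFinrank ho hcard
    refine ⟨B.toOrthonormalBasis (by simpa [B] using ho), ?_⟩
    simp [B, inner_smul_left, hb1, hb2, hb3]
    simpa [inner_smul_left] using And.intro hs' ht'
  have en : n = ⟪f 0, n⟫ • f 0 := by
    conv_lhs => rw [← f.sum_repr' n]
    simp [Fin.sum_univ_three, hf1, hf2]
  have em : m = ⟪f 0, m⟫ • f 0 + ⟪f 1, m⟫ • f 1 := by
    conv_lhs => rw [← f.sum_repr' m]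
    simp [Fin.sum_univ_three, hf3]
  have hnn : ‖n‖ = ⟪f 0, n⟫ := by
    conv_lhs => rw [en, norm_smul, Real.norm_of_nonneg hf4, f.norm_eq_one, mul_one]
  have hmm : ‖m‖ ^ 2 = ⟪f 0, m⟫ ^ 2 + ⟪f 1, m⟫ ^ 2 := by
    rw [← f.sum_sq_inner_right m]
    simp [Fin.sum_univ_three, hf3]
  have hnm : ⟪n, m⟫ = ‖n‖ * ⟪f 0, m⟫ := by
    conv_lhs => rw [en, real_inner_smul_left, ← hnn]
  have hn0 : 0 < ‖n‖ := norm_pos_iff.mpr hn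
  have hm0 : 0 < ‖m‖ := norm_pos_iff.mpr hm
  have hcos : ‖m‖ * Real.cos (angle n m) = ⟪f 0, m⟫ := by
    rw [cos_angle, hnm]; field_simp
  have hsin : ‖m‖ * Real.sin (angle n m) = ⟪f 1, m⟫ := by
    refine (sq_eq_sq₀ (mul_nonneg hm0.le (sin_angle_nonneg _ _)) hf5).mp ?_
    rw [mul_pow, Real.sin_sq, mul_sub, ← mul_pow, hcos, hmm]
    ring
  refine ⟨f, by rw [hnn]; exact en, ?_⟩
  rw [smul_add, smul_smul, smul_smul, hcos, hsin]
  exact em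

lemma frame_inner {F : Type*} [NormedAddCommGroup F] [InnerProductSpace ℝ F]
    (f : OrthonormalBasis (Fin 3) ℝ F) (a b c a' b' c' : ℝ) :
    ⟪a • f 0 + b • f 1 + c • f 2, a' • f 0 + b' • f 1 + c' • f 2⟫ = a * a' + b * b' + c * c' := by
  have h := f.orthonormal
  rw [orthonormal_iff_ite] at h
  simp only [inner_add_left, inner_add_right, real_inner_smul_left, real_inner_smul_right, h]
  simp
  ring

lemma frame_norm_sq {F : Type*} [NormedAddCommGroup F] [InnerProductSpace ℝ F]
    (f : OrthonormalBasis (Fin 3) ℝ F) (a b c : ℝ) :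
    ‖a • f 0 + b • f 1 + c • f 2‖ ^ 2 = a ^ 2 + b ^ 2 + c ^ 2 := by
  rw [← real_inner_self_eq_norm_sq, frame_inner]
  ring

/-- The isometric embedding of the model space whose image has the given orthonormal frame. -/
noncomputable def frameEmbedding {W : Submodule ℝ 𝔼} (f : OrthonormalBasis (Fin 3) ℝ W)
    (x : Model3) : 𝔼 :=
  ((x.fst.re • f 0 + x.fst.im • f 1 + x.snd • f 2 : W) : 𝔼)

lemma isometry_frameEmbedding {W : Submodule ℝ 𝔼} (f : OrthonormalBasis (Fin 3) ℝ W) :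
    Isometry (frameEmbedding f) := by
  refine Isometry.of_dist_eq fun x y => ?_
  refine (sq_eq_sq₀ dist_nonneg dist_nonneg).mp ?_
  rw [dist_eq_norm, dist_eq_norm, model_norm_sq, frameEmbedding, frameEmbedding,
    ← Submodule.coe_sub, ← Submodule.coe_norm]
  have : (x.fst.re • f 0 + x.fst.im • f 1 + x.snd • f 2) -
      (y.fst.re • f 0 + y.fst.im • f 1 + y.snd • f 2) =
      ((x.fst.re - y.fst.re) • f 0 + (x.fst.im - y.fst.im) • f 1 + (x.snd - y.snd) • f 2) := by
    module
  rw [this, frame_norm_sq]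
  rfl

lemma norm_frameEmbedding {W : Submodule ℝ 𝔼} (f : OrthonormalBasis (Fin 3) ℝ W) (x : Model3) :
    ‖frameEmbedding f x‖ = ‖x‖ := by
  refine (sq_eq_sq₀ (norm_nonneg _) (norm_nonneg _)).mp ?_
  rw [model_norm_sq, frameEmbedding, ← Submodule.coe_norm, frame_norm_sq]

lemma exists_frameEmbedding_eq {W : Submodule ℝ 𝔼} (f : OrthonormalBasis (Fin 3) ℝ W) {u : 𝔼}
    (hu : u ∈ W) : ∃ x, frameEmbedding f x = u := by
  refine ⟨WithLp.toLp 2 (⟨⟪f 0, ⟨u, hu⟩⟫, ⟪f 1, ⟨u, hu⟩⟫⟩, ⟪f 2, ⟨u, hu⟩⟫), ?_⟩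
  have h := f.sum_repr' ⟨u, hu⟩
  rw [Fin.sum_univ_three] at h
  exact congrArg Subtype.val h

/-- The unit sphere of the subspace `W`. -/
def unitSphere (W : Submodule ℝ 𝔼) : Set 𝔼 := {u | ‖u‖ = 1 ∧ u ∈ W}

lemma measurableSet_unitSphere (W : Submodule ℝ 𝔼) : MeasurableSet (unitSphere W) :=
  ((isClosed_eq continuous_norm continuous_const).inter
    W.closed_of_finiteDimensional).measurableSet

/-- Lune areas in an arbitrary 3-dimensional subspace of `ℝ⁴`, with a constant that does not depend
on the subspace: all its unit spheres are isometric to the one of the model space. -/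
lemma exists_subspace_lune_measure : ∃ c : NNReal, ∀ W : Submodule ℝ 𝔼, Module.finrank ℝ W = 3 →
    (μH[2] (unitSphere W) = ENNReal.ofReal (c * (2 * Real.pi))) ∧
    ∀ n ∈ W, ∀ m ∈ W, n ≠ 0 → m ≠ 0 →
      μH[2] (unitSphere W ∩ {u | 0 ≤ ⟪n, u⟫ ∧ 0 ≤ ⟪m, u⟫}) =
        ENNReal.ofReal (c * (Real.pi - angle n m)) := by
  obtain ⟨c, hc1, hc2⟩ := exists_lune_measure
  refine ⟨c, fun W hW => ⟨?_, fun n hn m hm hn0 hm0 => ?_⟩⟩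
  · let f : OrthonormalBasis (Fin 3) ℝ W :=
      (stdOrthonormalBasis ℝ W).reindex (finCongr hW)
    rw [← hc1, ← (isometry_frameEmbedding f).hausdorffMeasure_image (Or.inl (by norm_num))]
    congr 1
    ext u
    constructor
    · rintro ⟨hu1, hu2⟩
      obtain ⟨x, rfl⟩ := exists_frameEmbedding_eq f hu2
      exact ⟨x, by simpa [norm_frameEmbedding] using hu1, rfl⟩
    · rintro ⟨x, hx, rfl⟩
      exact ⟨by simpa [norm_frameEmbedding] using hx, Subtype.coe_prop _⟩
  · obtain ⟨f, hf1, hf2⟩ := exists_adapted_basis hW (n := ⟨n, hn⟩) (m := ⟨m, hm⟩)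
      (by simpa [Subtype.ext_iff] using hn0) (by simpa [Subtype.ext_iff] using hm0)
    have hang : angle (⟨n, hn⟩ : W) ⟨m, hm⟩ = angle n m := rfl
    rw [hang] at hf2
    have h1 : ∀ x, ⟪n, frameEmbedding f x⟫ = ‖n‖ * x.fst.re := by
      intro x
      have e : ⟪n, frameEmbedding f x⟫ = ⟪(⟨n, hn⟩ : W),
          x.fst.re • f 0 + x.fst.im • f 1 + x.snd • f 2⟫ := rfl
      rw [e, hf1]
      simpa using frame_inner f ‖n‖ 0 0 x.fst.re x.fst.im x.snd
    have h2 : ∀ x, ⟪m, frameEmbedding f x⟫ =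
        ‖m‖ * (Real.cos (angle n m) * x.fst.re + Real.sin (angle n m) * x.fst.im) := by
      intro x
      have e : ⟪m, frameEmbedding f x⟫ = ⟪(⟨m, hm⟩ : W),
          x.fst.re • f 0 + x.fst.im • f 1 + x.snd • f 2⟫ := rfl
      have e' := frame_inner f (Real.cos (angle n m)) (Real.sin (angle n m)) 0
        x.fst.re x.fst.im x.snd
      rw [zero_smul, add_zero, zero_mul, add_zero] at e'
      rw [e, hf2, real_inner_smul_left, e']
      rfl
    rw [← hc2 _ (angle_nonneg n m) (angle_le_pi n m),
      ← (isometry_frameEmbedding f).hausdorffMeasure_image (Or.inl (by norm_num))]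
    congr 1
    have hn' : 0 < ‖n‖ := norm_pos_iff.mpr hn0
    have hm' : 0 < ‖m‖ := norm_pos_iff.mpr hm0
    ext u
    constructor
    · rintro ⟨⟨hu1, hu2⟩, hu3, hu4⟩
      obtain ⟨x, rfl⟩ := exists_frameEmbedding_eq f hu2
      rw [h1, mul_nonneg_iff_of_pos_left hn'] at hu3
      rw [h2, mul_nonneg_iff_of_pos_left hm'] at hu4
      exact ⟨x, ⟨by rwa [norm_frameEmbedding] at hu1, hu3, hu4⟩, rfl⟩
    · rintro ⟨x, ⟨hx1, hx2, hx3⟩, rfl⟩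
      refine ⟨⟨by rwa [norm_frameEmbedding], Subtype.coe_prop _⟩, ?_, ?_⟩
      · rw [h1]; positivity
      · rw [h2]; positivity

/-! ### Areas of spherical triangles -/

/-- Girard's formula for the area of a spherical triangle, given as the intersection of three
hemispheres with inner normals `n`, `m`, `p`. Inclusion-exclusion expresses the area of the union of
the hemispheres through the areas of lunes and of the triangle, and the complement of that union is
the antipodal triangle. -/
lemma girard {c : NNReal} {W : Submodule ℝ 𝔼}
    (hW : μH[2] (unitSphere W) = ENNReal.ofReal (c * (2 * Real.pi)))
    (hlune : ∀ n ∈ W, ∀ m ∈ W, n ≠ 0 → m ≠ 0 →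
      μH[2] (unitSphere W ∩ {u | 0 ≤ ⟪n, u⟫ ∧ 0 ≤ ⟪m, u⟫}) =
        ENNReal.ofReal (c * (Real.pi - angle n m)))
    {n m p : 𝔼} (hn : n ∈ W) (hm : m ∈ W) (hp : p ∈ W) (hn0 : n ≠ 0) (hm0 : m ≠ 0) (hp0 : p ≠ 0) :
    μH[2] (unitSphere W ∩ {u | 0 ≤ ⟪n, u⟫ ∧ 0 ≤ ⟪m, u⟫ ∧ 0 ≤ ⟪p, u⟫}) =
      ENNReal.ofReal (c / 2 * ((Real.pi - angle n m) + (Real.pi - angle n p) +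
        (Real.pi - angle m p) - Real.pi)) := by
  have hpi := Real.pi_pos
  set ν : Measure 𝔼 := (μH[2]).restrict (unitSphere W) with hν
  have hνfin : IsFiniteMeasure ν := ⟨by
    rw [hν, Measure.restrict_apply_univ, hW]; exact ENNReal.ofReal_lt_top⟩
  let H : 𝔼 → Set 𝔼 := fun v => {u | 0 ≤ ⟪v, u⟫}
  have hHm : ∀ v, MeasurableSet (H v) := fun v =>
    (isClosed_le continuous_const (continuous_const.inner continuous_id)).measurableSet
  have hL : ∀ v ∈ W, ∀ w ∈ W, v ≠ 0 → w ≠ 0 → ν.real (H v ∩ H w) = c * (Real.pi - angle v w) := by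
    intro v hv w hw hv0 hw0
    rw [measureReal_def, hν, Measure.restrict_apply ((hHm v).inter (hHm w)), Set.inter_comm]
    have := hlune v hv w hw hv0 hw0
    change (μH[2] (unitSphere W ∩ {u | 0 ≤ ⟪v, u⟫ ∧ 0 ≤ ⟪w, u⟫})).toReal = _
    rw [this, ENNReal.toReal_ofReal]
    exact mul_nonneg c.coe_nonneg (sub_nonneg.mpr (angle_le_pi v w))
  have hone : ∀ v ∈ W, v ≠ 0 → ν.real (H v) = c * Real.pi := by
    intro v hv hv0
    have := hL v hv v hv hv0 hv0
    rwa [Set.inter_self, angle_self hv0, sub_zero] at this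
  have hnull : ∀ v ∈ W, v ≠ 0 → ∀ᵐ u ∂ν, ⟪v, u⟫ ≠ 0 := by
    intro v hv hv0
    have h := hL v hv (-v) (W.neg_mem hv) hv0 (neg_ne_zero.mpr hv0)
    rw [angle_self_neg_of_nonzero hv0, sub_self, mul_zero, measureReal_eq_zero_iff] at h
    filter_upwards [measure_eq_zero_iff_ae_notMem.mp h] with u hu h0
    exact hu ⟨h0.ge, by simp [H, h0]⟩
  have huniv : ν.real Set.univ = c * (2 * Real.pi) := by
    rw [measureReal_def, hν, Measure.restrict_apply_univ, hW, ENNReal.toReal_ofReal (by positivity)]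
  have hneg : MeasurePreserving (IsometryEquiv.neg 𝔼) ν ν := by
    have h := ((IsometryEquiv.neg 𝔼).measurePreserving_hausdorffMeasure 2).restrict_preimage
      (measurableSet_unitSphere W)
    have e : IsometryEquiv.neg 𝔼 ⁻¹' unitSphere W = unitSphere W := by
      ext u
      simp [unitSphere]
    rwa [e] at h
  set T := H n ∩ H m ∩ H p with hT
  have hTm : MeasurableSet T := ((hHm n).inter (hHm m)).inter (hHm p)
  -- the complement of the union is antipodal to the triangle, up to a null set
  have hcompl : ν.real (H n ∪ H m ∪ H p)ᶜ = ν.real T := by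
    rw [measureReal_def, measureReal_def, ← hneg.measure_preimage hTm.nullMeasurableSet]
    congr 1
    apply measure_congr
    filter_upwards [hnull n hn hn0, hnull m hm hm0, hnull p hp hp0] with u h1 h2 h3
    apply propext
    change ¬ ((0 ≤ ⟪n, u⟫ ∨ 0 ≤ ⟪m, u⟫) ∨ 0 ≤ ⟪p, u⟫) ↔
      ((0 ≤ ⟪n, -u⟫ ∧ 0 ≤ ⟪m, -u⟫) ∧ 0 ≤ ⟪p, -u⟫)
    simp only [inner_neg_right, Left.nonneg_neg_iff, not_or, not_le, lt_iff_le_and_ne, ne_eq, h1,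
      h2, h3, not_false_eq_true, and_true]
  have i1 := measureReal_union_add_inter (μ := ν) (s := H n ∪ H m) (hHm p)
  have i2 := measureReal_union_add_inter (μ := ν) (s := H n) (hHm m)
  have i3 := measureReal_union_add_inter (μ := ν) (s := H n ∩ H p) ((hHm m).inter (hHm p))
  have e1 : (H n ∪ H m) ∩ H p = H n ∩ H p ∪ H m ∩ H p := Set.union_inter_distrib_right _ _ _
  have e2 : H n ∩ H p ∩ (H m ∩ H p) = T := by
    ext u; simp only [hT, Set.mem_inter_iff]; tauto
  rw [e1] at i1
  rw [e2] at i3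
  have i4 := measureReal_add_measureReal_compl (μ := ν) (((hHm n).union (hHm m)).union (hHm p))
  rw [hcompl, huniv] at i4
  rw [hL n hn p hp hn0 hp0, hL m hm p hp hm0 hp0] at i3
  rw [hL n hn m hm hn0 hm0, hone n hn hn0, hone m hm hm0] at i2
  rw [hone p hp hp0] at i1
  have hfinal : ν.real T = c / 2 * ((Real.pi - angle n m) + (Real.pi - angle n p) +
        (Real.pi - angle m p) - Real.pi) := by linarith
  have hset : unitSphere W ∩ {u | 0 ≤ ⟪n, u⟫ ∧ 0 ≤ ⟪m, u⟫ ∧ 0 ≤ ⟪p, u⟫} = T ∩ unitSphere W := by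
    ext u; simp only [hT, H, Set.mem_inter_iff, Set.mem_ofPred_eq]; tauto
  rw [hset, ← Measure.restrict_apply hTm, ← hfinal, measureReal_def,
    ENNReal.ofReal_toReal (measure_ne_top _ _)]

/-! ### Barycentric coordinates and trihedral angles of a simplex -/

/-- The functions `x ↦ ⟪n k, x⟫ + β k` are the barycentric coordinates of the simplex with
vertices `V`. -/
structure IsBarycentric (V n : Fin 5 → 𝔼) (β : Fin 5 → ℝ) : Prop where
  apply_vertex : ∀ k i, ⟪n k, V i⟫ + β k = if k = i then 1 else 0
  sum_eq_one : ∀ x, ∑ k, (⟪n k, x⟫ + β k) = 1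
  sum_smul_eq : ∀ x, ∑ k, (⟪n k, x⟫ + β k) • V k = x

namespace IsBarycentric

variable {V n : Fin 5 → 𝔼} {β : Fin 5 → ℝ}

lemma mem_convexHull_iff (h : IsBarycentric V n β) (x : 𝔼) :
    x ∈ convexHull ℝ (Set.range V) ↔ ∀ k, 0 ≤ ⟪n k, x⟫ + β k := by
  constructor
  · intro hx k
    have hconv : Convex ℝ {x : 𝔼 | -β k ≤ ⟪n k, x⟫} :=
      convex_halfSpace_ge (innerSL ℝ (n k)).isBoundedLinearMap.toIsLinearMap _
    have hsub : Set.range V ⊆ {x : 𝔼 | -β k ≤ ⟪n k, x⟫} := by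
      rintro _ ⟨i, rfl⟩
      have := h.apply_vertex k i
      simp only [Set.mem_ofPred_eq]
      split_ifs at this <;> linarith
    have : -β k ≤ ⟪n k, x⟫ := convexHull_min hsub hconv hx
    linarith
  · intro hx
    rw [← h.sum_smul_eq x]
    exact (convex_convexHull ℝ _).sum_mem (fun k _ => hx k) (h.sum_eq_one x)
      (fun k _ => subset_convexHull ℝ _ ⟨k, rfl⟩)

lemma affineIndependent (h : IsBarycentric V n β) : AffineIndependent ℝ V := by
  rw [affineIndependent_iff_of_fintype]
  intro w hw hs k
  rw [Finset.weightedVSub_eq_linear_combination _ hw] at hs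
  have h1 : ∑ i, w i * (⟪n k, V i⟫ + β k) = ⟪n k, ∑ i, w i • V i⟫ + (∑ i, w i) * β k := by
    simp [inner_sum, real_inner_smul_right, mul_add, Finset.sum_add_distrib, Finset.sum_mul]
  rw [hs, hw] at h1
  simpa [h.apply_vertex] using h1

lemma normal_ne_zero (h : IsBarycentric V n β) (k : Fin 5) : n k ≠ 0 := by
  intro h0
  obtain ⟨i, hi⟩ : ∃ i, k ≠ i := ⟨if k = 0 then 1 else 0, by split_ifs with h <;> simp [h]⟩
  have h1 := h.apply_vertex k k
  have h2 := h.apply_vertex k i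
  simp [h0, hi] at h1 h2
  linarith

lemma sum_normal (h : IsBarycentric V n β) : ∑ k, n k = 0 := by
  refine ext_inner_right ℝ fun x => ?_
  have h1 := h.sum_eq_one x
  have h2 := h.sum_eq_one 0
  simp [Finset.sum_add_distrib] at h1 h2
  rw [sum_inner, inner_zero_left]
  linarith

/-- The interior dihedral angle between the facets opposite to the vertices `k` and `l`, as a function
of the inner facet normals `n`. -/
noncomputable def dihedral (n : Fin 5 → 𝔼) (k l : Fin 5) : ℝ := Real.pi - angle (n k) (n l)

/-- At the edge `ij` the trihedral angle is the area of a spherical triangle whose sides lie in the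
three facets containing the edge, namely those opposite to the remaining vertices `k`, `l`, `m`. -/
lemma trihedralAngle_eq {c : NNReal} (hc : ∀ W : Submodule ℝ 𝔼, Module.finrank ℝ W = 3 →
    (μH[2] (unitSphere W) = ENNReal.ofReal (c * (2 * Real.pi))) ∧
    ∀ n ∈ W, ∀ m ∈ W, n ≠ 0 → m ≠ 0 →
      μH[2] (unitSphere W ∩ {u | 0 ≤ ⟪n, u⟫ ∧ 0 ≤ ⟪m, u⟫}) =
        ENNReal.ofReal (c * (Real.pi - angle n m)))
    (h : IsBarycentric V n β) {i j k l m : Fin 5} (hij : i ≠ j) (hk : k ≠ i ∧ k ≠ j)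
    (hl : l ≠ i ∧ l ≠ j) (hm : m ≠ i ∧ m ≠ j)
    (hall : ∀ a, a = i ∨ a = j ∨ a = k ∨ a = l ∨ a = m) :
    trihedralAngle4 (convexHull ℝ (Set.range V)) (V i) (V j) =
      ENNReal.ofReal (c / 2 * (dihedral n k l + dihedral n k m + dihedral n l m - Real.pi)) := by
  have hV : V j - V i ≠ 0 := sub_ne_zero.mpr fun e => hij (h.affineIndependent.injective e.symm)
  have : Fact (Module.finrank ℝ 𝔼 = 3 + 1) := ⟨by simp⟩
  have hW := hc (ℝ ∙ (V j - V i))ᗮ (Submodule.finrank_orthogonal_span_singleton hV)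
  have hmem : ∀ a, a ≠ i ∧ a ≠ j → n a ∈ (ℝ ∙ (V j - V i))ᗮ := by
    intro a ha
    rw [Submodule.mem_orthogonal_singleton_iff_inner_left, inner_sub_right]
    have h1 := h.apply_vertex a i
    have h2 := h.apply_vertex a j
    rw [if_neg ha.1] at h1
    rw [if_neg ha.2] at h2
    linarith
  have g := girard hW.1 hW.2 (hmem k hk) (hmem l hl) (hmem m hm) (h.normal_ne_zero k)
    (h.normal_ne_zero l) (h.normal_ne_zero m)
  rw [trihedralAngle4]
  refine Eq.trans ?_ g
  congr 1
  ext u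
  have hcoord : ∀ a (t : ℝ), ⟪n a, midpoint ℝ (V i) (V j) + t • u⟫ + β a =
      ((if a = i then 1 else 0) + (if a = j then 1 else 0)) / 2 + t * ⟪n a, u⟫ := by
    intro a t
    rw [← h.apply_vertex a i, ← h.apply_vertex a j, midpoint_eq_smul_add, inner_add_right,
      real_inner_smul_right, real_inner_smul_right, inner_add_right, invOf_eq_inv]
    ring
  have key : (∃ t > (0 : ℝ), midpoint ℝ (V i) (V j) + t • u ∈ convexHull ℝ (Set.range V)) ↔
      0 ≤ ⟪n k, u⟫ ∧ 0 ≤ ⟪n l, u⟫ ∧ 0 ≤ ⟪n m, u⟫ := by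
    simp only [h.mem_convexHull_iff, hcoord]
    constructor
    · rintro ⟨t, ht, H⟩
      have : ∀ a, a ≠ i ∧ a ≠ j → 0 ≤ ⟪n a, u⟫ := by
        intro a ha
        have := H a
        rw [if_neg ha.1, if_neg ha.2, add_zero, zero_div, zero_add] at this
        exact nonneg_of_mul_nonneg_right this ht
      exact ⟨this k hk, this l hl, this m hm⟩
    · rintro ⟨Hk, Hl, Hm⟩
      -- the coordinates at `i` and `j` equal `1/2` at the midpoint, so a short step keeps them
      -- nonnegative
      have hpos : 0 < 2 * (1 + |⟪n i, u⟫| + |⟪n j, u⟫|) := by positivity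
      have hbig : ∀ x : ℝ, |x| ≤ |⟪n i, u⟫| + |⟪n j, u⟫| →
          0 ≤ 1 / 2 + (2 * (1 + |⟪n i, u⟫| + |⟪n j, u⟫|))⁻¹ * x := by
        intro x hx
        have h1 : 0 ≤ 1 + |⟪n i, u⟫| + |⟪n j, u⟫| + x := by linarith [neg_abs_le x]
        have h2 : 1 / 2 + (2 * (1 + |⟪n i, u⟫| + |⟪n j, u⟫|))⁻¹ * x =
            (2 * (1 + |⟪n i, u⟫| + |⟪n j, u⟫|))⁻¹ * (1 + |⟪n i, u⟫| + |⟪n j, u⟫| + x) := by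
          field_simp
        rw [h2]
        positivity
      refine ⟨(2 * (1 + |⟪n i, u⟫| + |⟪n j, u⟫|))⁻¹, inv_pos.mpr hpos, fun a => ?_⟩
      have hrest : ∀ b, b ≠ i ∧ b ≠ j → 0 ≤ ⟪n b, u⟫ →
          0 ≤ ((if b = i then (1 : ℝ) else 0) + (if b = j then 1 else 0)) / 2 +
            (2 * (1 + |⟪n i, u⟫| + |⟪n j, u⟫|))⁻¹ * ⟪n b, u⟫ := by
        intro b hb hb'
        rw [if_neg hb.1, if_neg hb.2]
        positivity
      rcases hall a with rfl | rfl | rfl | rfl | rfl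
      · rw [if_pos rfl, if_neg hij, add_zero]
        exact hbig _ (by linarith [abs_nonneg ⟪n j, u⟫])
      · rw [if_pos rfl, if_neg hij.symm, zero_add]
        exact hbig _ (by linarith [abs_nonneg ⟪n i, u⟫])
      · exact hrest _ hk Hk
      · exact hrest _ hl Hl
      · exact hrest _ hm Hm
  simp only [Set.mem_ofPred_eq, Set.mem_inter_iff, unitSphere, key,
    Submodule.mem_orthogonal_singleton_iff_inner_left, and_assoc]

end IsBarycentric

open IsBarycentric

/-! ### The second-order estimate near the regular simplex -/

/-- If the cosines of all dihedral angles are within `η` of the regular value `1 / 4`, then the sum of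
their deviations is of order `η ^ 2`. That sum is the squared length of `∑ uₖ`, where `uₖ` are the
unit normals; the relation `∑ ‖nₖ‖ uₖ = 0` forces the `‖nₖ‖` to be equal up to a relative error of
order `η`, and hence `∑ uₖ` to have length of order `η`. -/
lemma sum_inner_unit_le (n : Fin 5 → 𝔼) (hn : ∀ k, n k ≠ 0) (hsum : ∑ k, n k = 0) {η : ℝ}
    (hη : ∀ k l, k ≠ l → |1 / 4 - Real.cos (dihedral n k l)| ≤ η) :
    ∑ k, ∑ l, (if k = l then 0 else 1 / 4 - Real.cos (dihedral n k l)) ≤ 400 * η ^ 2 := by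
  set x : Fin 5 → ℝ := fun k => ‖n k‖ with hx
  set u : Fin 5 → 𝔼 := fun k => ‖n k‖⁻¹ • n k with hu
  have hx0 : ∀ k, 0 < x k := fun k => norm_pos_iff.mpr (hn k)
  have hxu : ∀ k, x k • u k = n k := fun k => by
    simp only [hx, hu, smul_smul]
    rw [mul_inv_cancel₀ (hx0 k).ne', one_smul]
  have hu1 : ∀ k, ‖u k‖ = 1 := fun k => by
    simp only [hu, norm_smul, norm_inv, norm_norm]
    exact inv_mul_cancel₀ (hx0 k).ne'
  set e : Fin 5 → Fin 5 → ℝ :=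
    fun k l => if k = l then 0 else 1 / 4 - Real.cos (dihedral n k l) with he
  have hη0 : 0 ≤ η := (abs_nonneg _).trans (hη 0 1 (by decide))
  have heη : ∀ k l, |e k l| ≤ η := by
    intro k l
    by_cases h : k = l
    · simpa [he, h] using hη0
    · simpa only [he, if_neg h] using hη k l h
  have hinner : ∀ k l, ⟪u k, u l⟫ = (if k = l then 5 / 4 else 0) - 1 / 4 + e k l := by
    intro k l
    by_cases h : k = l
    · subst h
      rw [real_inner_self_eq_norm_sq, hu1]
      simp [he]
      norm_num
    · simp only [he, if_neg h, dihedral, Real.cos_pi_sub, cos_angle, hu, real_inner_smul_left,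
        real_inner_smul_right]
      have := (hx0 k).ne'
      have := (hx0 l).ne'
      field_simp
      ring
  set X : ℝ := ∑ k, x k with hX
  have hXpos : 0 < X := Finset.sum_pos (fun k _ => hx0 k) Finset.univ_nonempty
  have hbal : ∀ l, 5 * x l - X = -4 * ∑ k, x k * e k l := by
    intro l
    have h0 : ∑ k, x k * ⟪u k, u l⟫ = 0 := by
      simp only [← real_inner_smul_left, hxu, ← sum_inner, hsum, inner_zero_left]
    simp only [hinner, mul_add, mul_sub, Finset.sum_add_distrib, Finset.sum_sub_distrib,
      mul_ite, mul_zero, Finset.sum_ite_eq', Finset.mem_univ, if_true, ← Finset.sum_mul] at h0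
    rw [← hX] at h0
    linarith
  have hy : ∀ l, |5 * x l / X - 1| ≤ 4 * η := by
    intro l
    have h1 : |∑ k, x k * e k l| ≤ X * η := by
      refine (Finset.abs_sum_le_sum_abs _ _).trans ?_
      rw [hX, Finset.sum_mul]
      refine Finset.sum_le_sum fun k _ => ?_
      rw [abs_mul, abs_of_pos (hx0 k)]
      exact mul_le_mul_of_nonneg_left (heη k l) (hx0 k).le
    have h2 : 5 * x l / X - 1 = (5 * x l - X) / X := by field_simp
    rw [h2, hbal, abs_div, abs_of_pos hXpos, div_le_iff₀ hXpos, abs_mul]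
    norm_num
    linarith
  have hsumu : ∑ l, u l = -∑ l, (5 * x l / X - 1) • u l := by
    have h3 : ∀ l, (5 * x l / X - 1) • u l = (5 / X) • n l - u l := by
      intro l
      rw [sub_smul, one_smul, mul_div_right_comm, ← smul_smul, hxu]
    simp only [h3, Finset.sum_sub_distrib, ← Finset.smul_sum, hsum, smul_zero, zero_sub, neg_neg]
  have hnorm : ‖∑ l, u l‖ ≤ 20 * η := by
    rw [hsumu, norm_neg]
    refine (norm_sum_le _ _).trans ?_
    calc ∑ l, ‖(5 * x l / X - 1) • u l‖ ≤ ∑ _l : Fin 5, 4 * η := by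
          refine Finset.sum_le_sum fun l _ => ?_
          rw [norm_smul, hu1, mul_one]
          exact hy l
      _ = 20 * η := by simp; ring
  have hsq : ‖∑ l, u l‖ ^ 2 = ∑ k, ∑ l, e k l := by
    rw [← real_inner_self_eq_norm_sq, sum_inner]
    simp only [inner_sum, hinner, Finset.sum_add_distrib, Finset.sum_sub_distrib]
    simp
    norm_num
  rw [← hsq]
  nlinarith [norm_nonneg (∑ l, u l)]

lemma sin_sub_self_le {d : ℝ} (hd : |d| ≤ 1) : |Real.sin d - d| ≤ d ^ 2 := by
  have h := Real.sin_bound hd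
  have h2 : |d ^ 3 / 6| ≤ d ^ 2 / 2 := by
    have := pow_le_pow_of_le_one (abs_nonneg d) hd (show 2 ≤ 3 by norm_num)
    rw [abs_div, abs_pow, ← sq_abs d, abs_of_pos (by norm_num : (0 : ℝ) < 6)]
    linarith [sq_nonneg |d|]
  have h3 : |d| ^ 5 / 100 ≤ d ^ 2 / 2 := by
    have := pow_le_pow_of_le_one (abs_nonneg d) hd (show 2 ≤ 5 by norm_num)
    rw [← sq_abs d]
    linarith [sq_nonneg |d|]
  calc |Real.sin d - d| = |(Real.sin d - (d - d ^ 3 / 6)) - d ^ 3 / 6| := by ring_nf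
    _ ≤ |Real.sin d - (d - d ^ 3 / 6)| + |d ^ 3 / 6| := abs_sub _ _
    _ ≤ d ^ 2 := by linarith

lemma cos_expansion {d : ℝ} (hd : |d| ≤ 1) :
    |1 / 4 - Real.cos (Real.arccos (1 / 4) + d)| ≤ |d| ∧
    Real.sin (Real.arccos (1 / 4)) * d - d ^ 2 ≤
      1 / 4 - Real.cos (Real.arccos (1 / 4) + d) := by
  have h0 : Real.cos (Real.arccos (1 / 4)) = 1 / 4 := Real.cos_arccos (by norm_num) (by norm_num)
  constructor
  · have := Real.abs_cos_sub_cos_le (Real.arccos (1 / 4)) (Real.arccos (1 / 4) + d)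
    rw [h0] at this
    simpa using this
  · have h1 := abs_le.mp (sin_sub_self_le hd)
    have h2 : 0 ≤ Real.sin (Real.arccos (1 / 4)) := by
      rw [Real.sin_arccos]; positivity
    have h3 := Real.sin_le_one (Real.arccos (1 / 4))
    rw [Real.cos_add, h0]
    nlinarith [Real.cos_le_one d, h1.1, h1.2, sq_nonneg d]

lemma half_le_sin : 1 / 2 ≤ Real.sin (Real.arccos (1 / 4)) := by
  rw [Real.sin_arccos]
  exact Real.le_sqrt_of_sq_le (by norm_num)

lemma dihedral_comm (n : Fin 5 → 𝔼) (k l : Fin 5) : dihedral n k l = dihedral n l k := by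
  rw [dihedral, dihedral, angle_comm]

/-- Near the regular simplex, the ten sums of the dihedral angles along the facet triples `klm` cannot
all exceed the regular value `3 arccos (1 / 4)`. -/
lemma not_all_trihedral_gt (n : Fin 5 → 𝔼) (hn : ∀ k, n k ≠ 0) (hsum : ∑ k, n k = 0)
    (hclose : ∀ k l, k ≠ l → |dihedral n k l - Real.arccos (1 / 4)| < 1 / 10000)
    (hgt : ∀ k l m, k < l → l < m →
      3 * Real.arccos (1 / 4) < dihedral n k l + dihedral n k m + dihedral n l m) : False := by
  set D : Fin 5 → Fin 5 → ℝ := fun k l => dihedral n k l - Real.arccos (1 / 4) with hD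
  have hS : ∀ k l m, k < l → l < m → 0 < D k l + D k m + D l m := by
    intro k l m hkl hlm
    have := hgt k l m hkl hlm
    simp only [hD]
    linarith
  have s1 := hS 0 1 2 (by decide) (by decide)
  have s2 := hS 0 1 3 (by decide) (by decide)
  have s3 := hS 0 1 4 (by decide) (by decide)
  have s4 := hS 0 2 3 (by decide) (by decide)
  have s5 := hS 0 2 4 (by decide) (by decide)
  have s6 := hS 0 3 4 (by decide) (by decide)
  have s7 := hS 1 2 3 (by decide) (by decide)
  have s8 := hS 1 2 4 (by decide) (by decide)
  have s9 := hS 1 3 4 (by decide) (by decide)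
  have s10 := hS 2 3 4 (by decide) (by decide)
  set T : ℝ := D 0 1 + D 0 2 + D 0 3 + D 0 4 + D 1 2 + D 1 3 + D 1 4 + D 2 3 + D 2 4 + D 3 4 with hT
  have hTpos : 0 < T := by linarith
  have hsymm : ∀ k l, D k l = D l k := fun k l => by simp only [hD, dihedral_comm]
  have habs : ∀ k l, k < l → |D k l| ≤ 3 / 2 * T := by
    intro k l hkl
    rw [abs_le]
    fin_cases k <;> fin_cases l <;> first | exact absurd hkl (by decide) | skip
    -- `D k l` is a third of the sum over the four triples that contain both or none of `k`, `l`, minus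
    -- a sixth of the sum over the other six, and the positive triple sums add up to `3 * T`
    all_goals
      simp only [Fin.mk_zero, Fin.mk_one, Fin.reduceFinMk, Fin.isValue]
      constructor <;> linarith
  have habs' : ∀ k l, k ≠ l → |D k l| ≤ 3 / 2 * T := by
    intro k l hkl
    rcases lt_or_gt_of_ne hkl with h | h
    · exact habs k l h
    · rw [hsymm]; exact habs l k h
  have hsmall : ∀ k l, k ≠ l → |D k l| < 1 / 10000 := hclose
  have hTsmall : T < 1 / 1000 := by
    have b : ∀ k l, k ≠ l → D k l < 1 / 10000 := fun k l h => (le_abs_self _).trans_lt (hsmall k l h)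
    have b1 := b 0 1 (by decide)
    have b2 := b 0 2 (by decide)
    have b3 := b 0 3 (by decide)
    have b4 := b 0 4 (by decide)
    have b5 := b 1 2 (by decide)
    have b6 := b 1 3 (by decide)
    have b7 := b 1 4 (by decide)
    have b8 := b 2 3 (by decide)
    have b9 := b 2 4 (by decide)
    have b10 := b 3 4 (by decide)
    linarith
  have hdih : ∀ k l, dihedral n k l = Real.arccos (1 / 4) + D k l := fun k l => by
    simp only [hD]; ring
  have hd1 : ∀ k l, k ≠ l → |D k l| ≤ 1 := fun k l h => (hsmall k l h).le.trans (by norm_num)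
  have hη : ∀ k l, k ≠ l → |1 / 4 - Real.cos (dihedral n k l)| ≤ 3 / 2 * T := by
    intro k l h
    rw [hdih]
    exact (cos_expansion (hd1 k l h)).1.trans (habs' k l h)
  have hquad := sum_inner_unit_le n hn hsum hη
  have hlow : ∑ k, ∑ l, (if k = l then 0 else
      Real.sin (Real.arccos (1 / 4)) * D k l - (3 / 2 * T) ^ 2) ≤
      ∑ k, ∑ l, (if k = l then 0 else 1 / 4 - Real.cos (dihedral n k l)) := by
    refine Finset.sum_le_sum fun k _ => Finset.sum_le_sum fun l _ => ?_
    split_ifs with h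
    · rfl
    · have h1 := (cos_expansion (hd1 k l h)).2
      rw [← hdih] at h1
      have h2 : D k l ^ 2 ≤ (3 / 2 * T) ^ 2 := by
        rw [← sq_abs]
        exact pow_le_pow_left₀ (abs_nonneg _) (habs' k l h) 2
      linarith
  have hexp : ∑ k, ∑ l, (if k = l then 0 else
      Real.sin (Real.arccos (1 / 4)) * D k l - (3 / 2 * T) ^ 2) =
      2 * Real.sin (Real.arccos (1 / 4)) * T - 20 * (3 / 2 * T) ^ 2 := by
    simp [Fin.sum_univ_five]
    rw [hsymm 1 0, hsymm 2 0, hsymm 3 0, hsymm 4 0, hsymm 2 1, hsymm 3 1, hsymm 4 1, hsymm 3 2,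
      hsymm 4 2, hsymm 4 3, hT]
    ring
  nlinarith [half_le_sin, mul_le_mul_of_nonneg_right half_le_sin hTpos.le]

/-! ### Facet normals as functions of the vertices -/

/-- The matrix whose `i`-th row is `(1, V i)`; `V` is affinely independent exactly when its
determinant does not vanish. -/
def vertexMatrix (V : Fin 5 → 𝔼) : Matrix (Fin 5) (Fin 5) ℝ :=
  Matrix.of fun i => Fin.cons 1 (fun a => V i a)

/-- The gradients of the barycentric coordinates, read off the columns of the inverse vertex matrix.
They are inner facet normals; their value is junk for a degenerate `V`. -/
noncomputable def normals (V : Fin 5 → 𝔼) (k : Fin 5) : 𝔼 :=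
  WithLp.toLp 2 fun a => (vertexMatrix V)⁻¹ a.succ k

/-- The constant terms of the barycentric coordinates. -/
noncomputable def offsets (V : Fin 5 → 𝔼) (k : Fin 5) : ℝ := (vertexMatrix V)⁻¹ 0 k

lemma vertexMatrix_mul_apply (V n : Fin 5 → 𝔼) (β : Fin 5 → ℝ) (B : Matrix (Fin 5) (Fin 5) ℝ)
    (hβ : ∀ k, B 0 k = β k) (hn : ∀ a k, B (Fin.succ a) k = n k a) (i k : Fin 5) :
    (vertexMatrix V * B) i k = ⟪n k, V i⟫ + β k := by
  rw [Matrix.mul_apply, Fin.sum_univ_succ]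
  simp only [vertexMatrix, Matrix.of_apply, Fin.cons_zero, Fin.cons_succ, hβ, hn, one_mul,
    PiLp.inner_apply, RCLike.inner_apply, conj_trivial]
  ring

lemma isBarycentric_normals (V : Fin 5 → 𝔼) (h : (vertexMatrix V).det ≠ 0) :
    IsBarycentric V (normals V) (offsets V) := by
  have hu : IsUnit (vertexMatrix V).det := isUnit_iff_ne_zero.mpr h
  have h1 := Matrix.mul_nonsing_inv _ hu
  have h2 := Matrix.nonsing_inv_mul _ hu
  have e (x : 𝔼) (k : Fin 5) : ⟪normals V k, x⟫ + offsets V k =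
      (Matrix.vecMul (Fin.cons 1 (fun a => x a)) (vertexMatrix V)⁻¹) k := by
    simp only [Matrix.vecMul, dotProduct]
    rw [Fin.sum_univ_succ]
    simp only [Fin.cons_zero, Fin.cons_succ, one_mul, normals, offsets, PiLp.inner_apply,
      RCLike.inner_apply, conj_trivial]
    ring
  have h3 (x : 𝔼) : Matrix.vecMul (fun k => ⟪normals V k, x⟫ + offsets V k) (vertexMatrix V) =
      Fin.cons 1 (fun a => x a) := by
    simp only [e]
    rw [Matrix.vecMul_vecMul, h2, Matrix.vecMul_one]
  constructor
  · intro k i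
    have := congrFun (congrFun h1 i) k
    rw [vertexMatrix_mul_apply V (normals V) (offsets V) _ (fun _ => rfl) (fun _ _ => rfl),
      Matrix.one_apply] at this
    rw [this]
    simp only [eq_comm]
  · intro x
    have := congrFun (h3 x) 0
    simpa [Matrix.vecMul, dotProduct, vertexMatrix] using this
  · intro x
    ext a
    have := congrFun (h3 x) a.succ
    simpa [Matrix.vecMul, dotProduct, vertexMatrix] using this

/-- For the regular simplex the barycentric gradients are positive multiples of the vectors from the
centroid to the vertices, which pairwise have cosine `-1 / 4`. -/
lemma regular_normals (R : Fin 5 → 𝔼) {r : ℝ} (hr : 0 < r)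
    (hreg : ∀ i j, i ≠ j → dist (R i) (R j) = r) :
    (vertexMatrix R).det ≠ 0 ∧
      ∀ k l, k ≠ l → dihedral (normals R) k l = Real.arccos (1 / 4) := by
  set g : 𝔼 := (1 / 5 : ℝ) • ∑ i, R i with hg
  set q : Fin 5 → 𝔼 := fun i => R i - g with hq
  have hq0 : ∑ i, q i = 0 := by
    simp only [hq, Finset.sum_sub_distrib, Finset.sum_const, Finset.card_univ, Fintype.card_fin, hg]
    module
  have hd (i j) (hij : i ≠ j) : ⟪q i, q i⟫ + ⟪q j, q j⟫ - 2 * ⟪q i, q j⟫ = r ^ 2 := by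
    have h1 : R i - R j = q i - q j := by simp [hq]
    rw [← hreg i j hij, dist_eq_norm, h1, ← real_inner_self_eq_norm_sq, real_inner_sub_sub_self (q i) (q j)]
    ring
  have hz (i) : ∑ j, ⟪q i, q j⟫ = 0 := by rw [← inner_sum, hq0, inner_zero_right]
  have hself (i) : ⟪q i, q i⟫ = 2 * r ^ 2 / 5 := by
    have hd' (a b) : ⟪q a, q a⟫ + ⟪q b, q b⟫ - 2 * ⟪q a, q b⟫ = if a = b then 0 else r ^ 2 := by
      split_ifs with h
      · subst h; ring
      · exact hd a b h
    have hrow (a) : 5 * ⟪q a, q a⟫ + ∑ b, ⟪q b, q b⟫ = 4 * r ^ 2 := by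
      have h1 := Finset.sum_congr rfl fun b (_ : b ∈ Finset.univ) => hd' a b
      rw [Finset.sum_sub_distrib, Finset.sum_add_distrib, ← Finset.mul_sum, hz] at h1
      simp only [Finset.sum_const, Finset.card_univ, Fintype.card_fin] at h1
      have h2 : ∑ b, (if a = b then 0 else r ^ 2) = 4 * r ^ 2 := by
        fin_cases a <;> simp [Fin.sum_univ_five] <;> ring
      rw [h2] at h1
      simpa using h1
    have htot : ∑ b, ⟪q b, q b⟫ = 2 * r ^ 2 := by
      have h1 := Finset.sum_congr rfl fun b (_ : b ∈ Finset.univ) => hrow b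
      rw [Finset.sum_add_distrib, ← Finset.mul_sum] at h1
      simp only [Finset.sum_const, Finset.card_univ, Fintype.card_fin, nsmul_eq_mul] at h1
      push_cast at h1
      linarith
    have := hrow i
    linarith
  have hoff (i j) (hij : i ≠ j) : ⟪q i, q j⟫ = -(r ^ 2 / 10) := by
    have := hd i j hij
    rw [hself, hself] at this
    linarith
  set n : Fin 5 → 𝔼 := fun k => (2 / r ^ 2) • q k with hn
  set B : Matrix (Fin 5) (Fin 5) ℝ :=
    Matrix.of (Fin.cons (fun k => 1 / 5 - ⟪n k, g⟫) fun a k => n k a) with hB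
  have hMB : vertexMatrix R * B = 1 := by
    ext i k
    rw [vertexMatrix_mul_apply R n (fun k => 1 / 5 - ⟪n k, g⟫) B (fun _ => rfl) (fun _ _ => rfl)]
    have h1 : ⟪n k, R i⟫ + (1 / 5 - ⟪n k, g⟫) = 2 / r ^ 2 * ⟪q k, q i⟫ + 1 / 5 := by
      have h2 : q i = R i - g := rfl
      rw [h2, inner_sub_right, hn, real_inner_smul_left, real_inner_smul_left]
      ring
    rw [h1, Matrix.one_apply]
    split_ifs with h
    · subst h
      rw [hself]
      field_simp
      norm_num
    · rw [hoff k i (Ne.symm h)]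
      field_simp
      norm_num
  refine ⟨(Matrix.isUnit_det_of_right_inverse hMB).ne_zero, fun k l hkl => ?_⟩
  have hnorm (k) : normals R k = (2 / r ^ 2) • q k := by
    ext a
    simp only [normals, Matrix.inv_eq_right_inv hMB]
    rfl
  have hpos : 0 < 2 / r ^ 2 := by positivity
  rw [dihedral, hnorm, hnorm, angle_smul_left_of_pos _ _ hpos, angle_smul_right_of_pos _ _ hpos,
    angle, hoff k l hkl]
  have hnq (k l) : ‖q k‖ * ‖q l‖ = 2 * r ^ 2 / 5 := by
    have h1 (k) : ‖q k‖ = √(2 * r ^ 2 / 5) := by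
      rw [← hself k, real_inner_self_eq_norm_sq, Real.sqrt_sq (norm_nonneg _)]
    rw [h1, h1, Real.mul_self_sqrt (by positivity)]
  rw [hnq, show -(r ^ 2 / 10) / (2 * r ^ 2 / 5) = -(1 / 4) by field_simp; norm_num,
    Real.arccos_neg]
  ring

lemma continuous_vertexMatrix : Continuous vertexMatrix := by
  refine continuous_matrix fun i j => ?_
  refine Fin.cases ?_ (fun a => ?_) j
  · simp only [vertexMatrix, Matrix.of_apply, Fin.cons_zero]
    exact continuous_const
  · simp only [vertexMatrix, Matrix.of_apply, Fin.cons_succ]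
    fun_prop

lemma continuousAt_normals (V : Fin 5 → 𝔼) (h : (vertexMatrix V).det ≠ 0) (k : Fin 5) :
    ContinuousAt (fun W => normals W k) V := by
  have hinv : ContinuousAt (fun W => (vertexMatrix W)⁻¹) V := by
    simp only [Matrix.inv_def, Ring.inverse_eq_inv']
    exact (continuous_vertexMatrix.matrix_det.continuousAt.inv₀ h).smul
      continuous_vertexMatrix.matrix_adjugate.continuousAt
  refine (PiLp.continuous_toLp 2 _).continuousAt.comp (continuousAt_pi.mpr fun a => ?_)
  exact continuousAt_pi.mp (continuousAt_pi.mp hinv a.succ) k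

/-- Dihedral angles depend continuously on the vertices. -/
lemma eventually_dihedral (R : Fin 5 → 𝔼) {r : ℝ} (hr : 0 < r)
    (hreg : ∀ i j, i ≠ j → dist (R i) (R j) = r) :
    ∀ᶠ V in nhds R, (vertexMatrix V).det ≠ 0 ∧
      ∀ k l, k ≠ l → |dihedral (normals V) k l - Real.arccos (1 / 4)| < 1 / 10000 := by
  obtain ⟨hdet, hR⟩ := regular_normals R hr hreg
  have hb := isBarycentric_normals R hdet
  refine (continuous_vertexMatrix.matrix_det.continuousAt.eventually_ne hdet).and ?_
  simp only [Filter.eventually_all]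
  intro k l hkl
  have hc : ContinuousAt (fun V => dihedral (normals V) k l) R := by
    have h1 := (InnerProductGeometry.continuousAt_angle (x := (normals R k, normals R l))
      (hb.normal_ne_zero k) (hb.normal_ne_zero l))
    have h2 : ContinuousAt (fun V => (normals V k, normals V l)) R :=
      (continuousAt_normals R hdet k).prodMk (continuousAt_normals R hdet l)
    have h3 := ContinuousAt.comp (f := fun V => (normals V k, normals V l)) h1 h2
    exact continuousAt_const.sub h3
  have := Metric.continuousAt_iff'.mp hc (1 / 10000) (by norm_num)
  simpa only [hR k l hkl, Real.dist_eq] using this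

lemma exists_complementary_edge (k l m : Fin 5) (hkl : k < l) (hlm : l < m) :
    ∃ i j : Fin 5, i ≠ j ∧ (k ≠ i ∧ k ≠ j) ∧ (l ≠ i ∧ l ≠ j) ∧ (m ≠ i ∧ m ≠ j) ∧
      ∀ a, a = i ∨ a = j ∨ a = k ∨ a = l ∨ a = m := by
  revert k l m
  decide

/-- Every 4-simplex sufficiently close to the regular 4-simplex has an edge whose
trihedral angle is at most the trihedral angle at an edge of the regular 4-simplex. -/
theorem local_exists_edge_trihedralAngle_le_regular4
    (R : Fin 5 → EuclideanSpace ℝ (Fin 4)) (r : ℝ) (hr : 0 < r)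
    (hreg : ∀ i j, i ≠ j → dist (R i) (R j) = r) :
    ∃ ε > (0 : ℝ), ∀ V : Fin 5 → EuclideanSpace ℝ (Fin 4),
      (∀ i, ‖V i - R i‖ < ε) →
      AffineIndependent ℝ V ∧
      ∃ i j, i ≠ j ∧
        trihedralAngle4 (convexHull ℝ (Set.range V)) (V i) (V j) ≤
          trihedralAngle4 (convexHull ℝ (Set.range R)) (R 0) (R 1) := by
  obtain ⟨c, hc⟩ := exists_subspace_lune_measure
  obtain ⟨hdetR, hR⟩ := regular_normals R hr hreg
  obtain ⟨ε, hε, hball⟩ := Metric.eventually_nhds_iff.mp (eventually_dihedral R hr hreg)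
  refine ⟨ε, hε, fun V hV => ?_⟩
  obtain ⟨hdet, hclose⟩ := hball ((dist_pi_lt_iff hε).mpr fun i => by
    rw [dist_eq_norm]; exact hV i)
  have hb := isBarycentric_normals V hdet
  refine ⟨hb.affineIndependent, ?_⟩
  by_contra! hcon
  refine not_all_trihedral_gt (normals V) hb.normal_ne_zero hb.sum_normal hclose ?_
  intro k l m hkl hlm
  obtain ⟨i, j, hij, hk, hl, hm, hall⟩ := exists_complementary_edge k l m hkl hlm
  have h := hcon i j hij
  rw [trihedralAngle_eq hc hb hij hk hl hm hall,
    trihedralAngle_eq hc (isBarycentric_normals R hdetR) (i := 0) (j := 1) (k := 2) (l := 3) (m := 4)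
      (by decide) (by decide) (by decide) (by decide) (by decide),
    hR 2 3 (by decide), hR 2 4 (by decide), hR 3 4 (by decide)] at h
  have hc2 : (0 : ℝ) ≤ c / 2 := by positivity
  have h' := lt_of_mul_lt_mul_left (ENNReal.ofReal_lt_ofReal_iff'.mp h).1 hc2
  linarith
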